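/- arXiv:math/0502003 — 8 statements merged into one kernel-verified Lean document; each statement's English description precedes it below -/
import Mathlib

section
/- Suppose the connection D on U is compatible with the metric g. Then for all vector fields a, b, c on U and every x ∈ U, ⟪g x (ρ(a,b,c) x), c x⟫ = 0, i.e. the curvature field satisfies ρ(a,b,c) ·_g c = 0. -/
open scoped RealInnerProductSpace

variable {V : Type*} [NormedAddCommGroup V] [InnerProductSpace ℝ V] [FiniteDimensional ℝ V]

/-- A vector field on `U` is a smooth map `U → V`. -/
def IsVectorField (U : Set V) (X : V → V) : Prop := ContDiffOn ℝ (⊤ : ℕ∞) X U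

/-- Directional derivative `(a·∂X)(x) = fderiv ℝ X x (a x)`. -/
noncomputable def dirD (a X : V → V) : V → V := fun x => fderiv ℝ X x (a x)

/-- Lie bracket `[a,b] = a·∂b − b·∂a`. -/
noncomputable def bracket (a b : V → V) : V → V := fun x => dirD a b x - dirD b a x

/-- Smoothness of a connection field `Γ`. -/
def IsConnection (U : Set V) (Γ : V → V →ₗ[ℝ] V →ₗ[ℝ] V) : Prop :=
  ∀ u v : V, ContDiffOn ℝ (⊤ : ℕ∞) (fun x => Γ x u v) U

/-- Covariant derivative associated to the connection field `Γ`. -/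
noncomputable def covD (Γ : V → V →ₗ[ℝ] V →ₗ[ℝ] V) (a X : V → V) : V → V :=
  fun x => fderiv ℝ X x (a x) + Γ x (a x) (X x)

/-- Curvature of an abstract covariant-derivative operator. -/
noncomputable def curvOf (Dop : (V → V) → (V → V) → (V → V)) (a b c : V → V) : V → V :=
  fun x => Dop a (Dop b c) x - Dop b (Dop a c) x - Dop (bracket a b) c x

/-- Curvature field `ρ(a,b,c) = D_a (D_b c) − D_b (D_a c) − D_{[a,b]} c`. -/
noncomputable def curv (Γ : V → V →ₗ[ℝ] V →ₗ[ℝ] V) : (V → V) → (V → V) → (V → V) → V → V :=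
  curvOf (covD Γ)

/-- A metric on `U`: smooth, pointwise self-adjoint and invertible. -/
def IsMetric (U : Set V) (g : V → V →ₗ[ℝ] V) : Prop :=
  (∀ u : V, ContDiffOn ℝ (⊤ : ℕ∞) (fun x => g x u) U) ∧
  ∀ x ∈ U, (∀ u v : V, ⟪g x u, v⟫ = ⟪u, g x v⟫) ∧ Function.Bijective (g x)

/-- Compatibility of an abstract covariant-derivative operator with the metric `g`:
`a·∂(X ·_g Y) = (D_a X) ·_g Y + X ·_g (D_a Y)` on `U`. -/
def CompatibleD (U : Set V) (Dop : (V → V) → (V → V) → (V → V)) (g : V → V →ₗ[ℝ] V) : Prop :=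
  ∀ a X Y : V → V, IsVectorField U a → IsVectorField U X → IsVectorField U Y →
    ∀ x ∈ U, fderiv ℝ (fun y => ⟪g y (X y), Y y⟫) x (a x) =
      ⟪g x (Dop a X x), Y x⟫ + ⟪g x (X x), Dop a Y x⟫

/-- Compatibility of the connection `Γ` with the metric `g`. -/
def Compatible (U : Set V) (Γ : V → V →ₗ[ℝ] V →ₗ[ℝ] V) (g : V → V →ₗ[ℝ] V) : Prop :=
  CompatibleD U (covD Γ) g

theorem aux_lin {U : Set V} {W : Type*} [NormedAddCommGroup W] [NormedSpace ℝ W]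
    (L : V → V →ₗ[ℝ] W) (hL : ∀ u : V, ContDiffOn ℝ (⊤ : ℕ∞) (fun x => L x u) U)
    {X : V → V} (hX : ContDiffOn ℝ (⊤ : ℕ∞) X U) :
    ContDiffOn ℝ (⊤ : ℕ∞) (fun x => L x (X x)) U := by
  let B := stdOrthonormalBasis ℝ V
  have h : (fun x => L x (X x)) = fun x => ∑ i, ⟪B i, X x⟫ • L x (B i) := by
    funext x
    conv_lhs => rw [← B.sum_repr' (X x)]
    simp only [map_sum, map_smul]
  rw [h]
  exact ContDiffOn.sum fun i _ => (contDiffOn_const.inner ℝ hX).smul (hL (B i))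

theorem aux_dir {U : Set V} (hU : IsOpen U) {W : Type*} [NormedAddCommGroup W] [NormedSpace ℝ W]
    {F : V → W} (hF : ContDiffOn ℝ (⊤ : ℕ∞) F U)
    {a : V → V} (ha : ContDiffOn ℝ (⊤ : ℕ∞) a U) :
    ContDiffOn ℝ (⊤ : ℕ∞) (fun x => fderiv ℝ F x (a x)) U :=
  (hF.fderiv_of_isOpen hU (by simp)).clm_apply ha

theorem aux_cov {U : Set V} (hU : IsOpen U)
    {Γ : V → V →ₗ[ℝ] V →ₗ[ℝ] V} (hΓ : IsConnection U Γ) {a X : V → V}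
    (ha : IsVectorField U a) (hX : IsVectorField U X) : IsVectorField U (covD Γ a X) := by
  refine ContDiffOn.add (aux_dir hU hX ha) ?_
  refine aux_lin (fun x => Γ x (a x)) (fun u => ?_) hX
  exact aux_lin (fun x => (Γ x).flip u) (fun v => hΓ v u) ha

theorem aux_second {U : Set V} (hU : IsOpen U) {F : V → ℝ} (hF : ContDiffOn ℝ (⊤ : ℕ∞) F U)
    {a b : V → V} (hb : ContDiffOn ℝ (⊤ : ℕ∞) b U) {x : V} (hx : x ∈ U) :
    fderiv ℝ (fun y => fderiv ℝ F y (b y)) x (a x) =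
      fderiv ℝ (fderiv ℝ F) x (a x) (b x) + fderiv ℝ F x (fderiv ℝ b x (a x)) := by
  have h1 : DifferentiableAt ℝ (fderiv ℝ F) x :=
    ((hF.fderiv_of_isOpen (m := (⊤ : ℕ∞)) hU (by simp)).contDiffAt
      (hU.mem_nhds hx)).differentiableAt (by simp)
  have h2 : DifferentiableAt ℝ b x := (hb.contDiffAt (hU.mem_nhds hx)).differentiableAt (by simp)
  rw [fderiv_clm_apply h1 h2]
  simp [add_comm]

theorem aux_iter {U : Set V} (hU : IsOpen U)
    {Γ : V → V →ₗ[ℝ] V →ₗ[ℝ] V} (hΓ : IsConnection U Γ)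
    {g : V → V →ₗ[ℝ] V} (hg : IsMetric U g) (hcomp : Compatible U Γ g)
    {a b c : V → V} (ha : IsVectorField U a) (hb : IsVectorField U b)
    (hc : IsVectorField U c) {x : V} (hx : x ∈ U) :
    fderiv ℝ (fun y => fderiv ℝ (fun z => ⟪g z (c z), c z⟫) y (b y)) x (a x) =
      2 * (⟪g x (covD Γ a (covD Γ b c) x), c x⟫ + ⟪g x (covD Γ b c x), covD Γ a c x⟫) := by
  have hbc := aux_cov hU hΓ hb hc
  have he : (fun y => fderiv ℝ (fun z => ⟪g z (c z), c z⟫) y (b y)) =ᶠ[nhds x]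
      fun y => (2 : ℝ) * ⟪g y (covD Γ b c y), c y⟫ := by
    filter_upwards [hU.mem_nhds hx] with y hy
    rw [hcomp b c c hb hc hc y hy, (hg.2 y hy).1 (c y), real_inner_comm]
    rw [two_mul]
  have hd : DifferentiableAt ℝ (fun y => ⟪g y (covD Γ b c y), c y⟫) x :=
    (((aux_lin g hg.1 hbc).inner ℝ hc).contDiffAt (hU.mem_nhds hx)).differentiableAt (by simp)
  rw [he.fderiv_eq, fderiv_const_mul hd, ← hcomp a _ c ha hbc hc x hx]
  simp

theorem curvature_g_orthogonal
    (U : Set V) (hU : IsOpen U)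
    (Γ : V → V →ₗ[ℝ] V →ₗ[ℝ] V) (hΓ : IsConnection U Γ)
    (g : V → V →ₗ[ℝ] V) (hg : IsMetric U g)
    (hcomp : Compatible U Γ g)
    (a b c : V → V) (ha : IsVectorField U a) (hb : IsVectorField U b)
    (hc : IsVectorField U c)
    (x : V) (hx : x ∈ U) :
    ⟪g x (curv Γ a b c x), c x⟫ = 0 := by
  have hF : ContDiffOn ℝ (⊤ : ℕ∞) (fun z => ⟪g z (c z), c z⟫) U :=
    (aux_lin g hg.1 hc).inner ℝ hc
  have hbr : IsVectorField U (bracket a b) := (aux_dir hU hb ha).sub (aux_dir hU ha hb)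
  have hs : IsSymmSndFDerivAt ℝ (fun z => ⟪g z (c z), c z⟫) x :=
    (hF.contDiffAt (hU.mem_nhds hx)).isSymmSndFDerivAt (by simp; exact WithTop.coe_le_coe.2 (le_top : (2 : ℕ∞) ≤ ⊤))
  have e1 := aux_iter hU hΓ hg hcomp ha hb hc hx
  have e2 := aux_iter hU hΓ hg hcomp hb ha hc hx
  rw [aux_second hU hF hb hx] at e1
  rw [aux_second hU hF ha hx] at e2
  have e3 := hcomp _ c c hbr hc hc x hx
  have e4 : fderiv ℝ (fun z => ⟪g z (c z), c z⟫) x (bracket a b x) =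
      fderiv ℝ (fun z => ⟪g z (c z), c z⟫) x (fderiv ℝ b x (a x)) -
      fderiv ℝ (fun z => ⟪g z (c z), c z⟫) x (fderiv ℝ a x (b x)) := by
    simp only [bracket, dirD, map_sub]
  have e5 := hs.eq (a x) (b x)
  have sy : ∀ u v, ⟪g x u, v⟫ = ⟪g x v, u⟫ := fun u v => by
    rw [(hg.2 x hx).1 u v, real_inner_comm]
  have e6 := sy (covD Γ b c x) (covD Γ a c x)
  have e7 := sy (c x) (covD Γ (bracket a b) c x)
  simp only [curv, curvOf, map_sub, inner_sub_left]
  linarith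
end

section
/- (Proposition 1: existence of the Riemann extensor field.) Suppose the connection D on U is compatible with the metric g. Then for each x ∈ U there exists a bilinear form R_x : (⋀²[ℝ] V) × (⋀²[ℝ] V) → ℝ on the second exterior power of V such that for all vector fields a, b, c, d on U, R_x (a x ∧ b x, c x ∧ d x) = −⟪g x (ρ(a,b,c) x), d x⟫. In particular the quantity ⟪g x (ρ(a,b,c) x), d x⟫ depends only on the pointwise values a x, b x, c x, d x, skew-symmetrically in (a x, b x) and in (c x, d x). -/
open scoped RealInnerProductSpace

variable {V : Type*} [NormedAddCommGroup V] [InnerProductSpace ℝ V] [FiniteDimensional ℝ V]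

/-- The wedge `u ∧ v` of two vectors, as an element of the second exterior power `⋀[ℝ]^2 V`. -/
noncomputable def wedge2 (u v : V) : ⋀[ℝ]^2 V :=
  ⟨ExteriorAlgebra.ιMulti ℝ 2 ![u, v], ExteriorAlgebra.ιMulti_range ℝ 2 (Set.mem_range_self _)⟩

theorem wedge2_lift {N : Type*} [AddCommGroup N] [Module ℝ N]
    (B : V →ₗ[ℝ] V →ₗ[ℝ] N) (hB : ∀ v, B v v = 0) :
    ∃ L : (⋀[ℝ]^2 V) →ₗ[ℝ] N, ∀ u v, L (wedge2 u v) = B u v := by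
  let A : V [⋀^Fin 2]→ₗ[ℝ] N :=
    { toFun := fun m => B (m 0) (m 1)
      map_update_add' := by
        intro _ m i x y
        fin_cases i <;> simp [Function.update]
      map_update_smul' := by
        intro _ m i c x
        fin_cases i <;> simp [Function.update]
      map_eq_zero_of_eq' := by
        intro m i j h hij
        fin_cases i <;> fin_cases j <;> simp_all }
  refine ⟨exteriorPower.alternatingMapLinearEquiv A, fun u v => ?_⟩
  have h : wedge2 u v = exteriorPower.ιMulti ℝ 2 ![u, v] := rfl
  rw [h, exteriorPower.alternatingMapLinearEquiv_apply_ιMulti]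
  rfl

theorem wedge2_lift2 (B : V →ₗ[ℝ] V →ₗ[ℝ] V →ₗ[ℝ] V →ₗ[ℝ] ℝ) (h1 : ∀ u, B u u = 0)
    (h2 : ∀ u v w, B u v w w = 0) :
    ∃ R : (⋀[ℝ]^2 V) →ₗ[ℝ] (⋀[ℝ]^2 V) →ₗ[ℝ] ℝ,
      ∀ u v w z, R (wedge2 u v) (wedge2 w z) = B u v w z := by
  obtain ⟨L, hL⟩ := wedge2_lift (V := V) (N := V →ₗ[ℝ] V →ₗ[ℝ] ℝ) B h1
  let C : V →ₗ[ℝ] V →ₗ[ℝ] ((⋀[ℝ]^2 V) →ₗ[ℝ] ℝ) := LinearMap.mk₂ ℝ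
    (fun w z => LinearMap.applyₗ z ∘ₗ LinearMap.applyₗ w ∘ₗ L)
    (by intros; apply LinearMap.ext; intro ω; simp) (by intros; apply LinearMap.ext; intro ω; simp) (by intros; apply LinearMap.ext; intro ω; simp) (by intros; apply LinearMap.ext; intro ω; simp)
  have hC : ∀ w z ω, C w z ω = L ω w z := fun w z ω => rfl
  obtain ⟨M, hM⟩ := wedge2_lift C (by
    intro w
    apply exteriorPower.linearMap_ext
    ext m
    have h : exteriorPower.ιMulti ℝ 2 m = wedge2 (m 0) (m 1) := by
      have : m = ![m 0, m 1] := by ext i; fin_cases i <;> rfl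
      conv_lhs => rw [this]
      rfl
    simp [h, hC, hL, h2])
  exact ⟨M.flip, fun u v w z => by simp [hM, hC, hL]⟩

theorem curv_formula (U : Set V) (hU : IsOpen U)
    (Γ : V → V →ₗ[ℝ] V →ₗ[ℝ] V) (hΓ : IsConnection U Γ) (x : V) (hx : x ∈ U) :
    ∃ E : V →ₗ[ℝ] V →ₗ[ℝ] V →ₗ[ℝ] V, (∀ u, E u u = 0) ∧
      ∀ a b c : V → V, IsVectorField U a → IsVectorField U b → IsVectorField U c →
        curv Γ a b c x = E (a x) (b x) (c x) := by
  let G : V → V →L[ℝ] V →L[ℝ] V := fun y =>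
    LinearMap.toContinuousLinearMap (LinearMap.toContinuousLinearMap.toLinearMap ∘ₗ Γ y)
  have hG : ∀ y u v, G y u v = Γ y u v := fun y u v => rfl
  have hGs : ContDiffOn ℝ (⊤ : ℕ∞) G U := by
    rw [contDiffOn_clm_apply]
    intro u
    rw [contDiffOn_clm_apply]
    intro v
    exact hΓ u v
  have hUx : U ∈ nhds x := hU.mem_nhds hx
  have dG : DifferentiableAt ℝ G x := (hGs.contDiffAt hUx).differentiableAt (by simp)
  set G' := fderiv ℝ G x with hG'
  let E : V →ₗ[ℝ] V →ₗ[ℝ] V →ₗ[ℝ] V := LinearMap.mk₂ ℝ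
    (fun u v => ((G' u v : V →L[ℝ] V) : V →ₗ[ℝ] V) - ((G' v u : V →L[ℝ] V) : V →ₗ[ℝ] V)
      + Γ x u ∘ₗ Γ x v - Γ x v ∘ₗ Γ x u)
    (by intros; ext; simp; abel) (by intros; ext; simp [smul_sub, smul_add])
    (by intros; ext; simp; abel) (by intros; ext; simp [smul_sub, smul_add])
  have hE : ∀ u v w, E u v w = G' u v w - G' v u w + Γ x u (Γ x v w) - Γ x v (Γ x u w) :=
    fun u v w => rfl
  refine ⟨E, fun u => by ext w; simp [hE], ?_⟩
  intro a b c ha hb hc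
  have hda : DifferentiableAt ℝ a x := (ha.contDiffAt hUx).differentiableAt (by simp)
  have hdb : DifferentiableAt ℝ b x := (hb.contDiffAt hUx).differentiableAt (by simp)
  have hcx : ContDiffAt ℝ (⊤ : ℕ∞) c x := hc.contDiffAt hUx
  have hdc : DifferentiableAt ℝ c x := hcx.differentiableAt (by simp)
  have hddc : DifferentiableAt ℝ (fderiv ℝ c) x :=
    (hcx.fderiv_right (m := 1) (by norm_cast)).differentiableAt (by simp)
  have hsym : IsSymmSndFDerivAt ℝ c x := hcx.isSymmSndFDerivAt (by simp; norm_cast)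
  have key : ∀ b : V → V, DifferentiableAt ℝ b x → ∀ u : V,
      fderiv ℝ (covD Γ b c) x u = fderiv ℝ (fderiv ℝ c) x u (b x) + fderiv ℝ c x (fderiv ℝ b x u)
        + (G' u (b x) (c x) + Γ x (fderiv ℝ b x u) (c x) + Γ x (b x) (fderiv ℝ c x u)) := by
    intro b hdb u
    have e : covD Γ b c = fun y => fderiv ℝ c y (b y) + G y (b y) (c y) := rfl
    have h1 := (hddc.hasFDerivAt.clm_apply hdb.hasFDerivAt).add
      ((dG.hasFDerivAt.clm_apply hdb.hasFDerivAt).clm_apply hdc.hasFDerivAt)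
    rw [e]
    erw [h1.fderiv]
    simp [hG, ← hG']
    abel
  have hs := hsym (a x) (b x)
  simp only [curv, curvOf]
  have hcd : ∀ a X : V → V, covD Γ a X x = fderiv ℝ X x (a x) + Γ x (a x) (X x) :=
    fun a X => rfl
  rw [hcd a (covD Γ b c), hcd b (covD Γ a c), key b hdb, key a hda, hE, hs]
  simp only [covD, bracket, dirD, map_add, map_sub, LinearMap.sub_apply]
  abel

theorem curv_skew
    (U : Set V) (hU : IsOpen U)
    (Γ : V → V →ₗ[ℝ] V →ₗ[ℝ] V) (hΓ : IsConnection U Γ)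
    (g : V → V →ₗ[ℝ] V) (hg : IsMetric U g)
    (hcomp : Compatible U Γ g)
    (x : V) (hx : x ∈ U) (u v w : V) :
    ⟪g x (curv Γ (fun _ => u) (fun _ => v) (fun _ => w) x), w⟫ = 0 := by
  have hUx : U ∈ nhds x := hU.mem_nhds hx
  have hconst : ∀ u : V, IsVectorField U (fun _ => u) := fun u => contDiffOn_const
  let q : V → ℝ := fun y => ⟪g y w, w⟫
  have hq : ContDiffAt ℝ (⊤ : ℕ∞) q x :=
    ((hg.1 w).contDiffAt hUx).inner ℝ contDiffAt_const
  have hddq : DifferentiableAt ℝ (fderiv ℝ q) x :=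
    (hq.fderiv_right (m := 1) (by norm_cast)).differentiableAt (by simp)
  have hsym : IsSymmSndFDerivAt ℝ q x := hq.isSymmSndFDerivAt (by simp; norm_cast)
  have hcov : ∀ u w : V, covD Γ (fun _ => u) (fun _ => w) = fun y => Γ y u w := by
    intro u w; ext y; simp [covD]
  have h1 : ∀ u, ∀ y ∈ U, fderiv ℝ q y u = 2 * ⟪g y (Γ y u w), w⟫ := by
    intro u y hy
    have := hcomp (fun _ => u) (fun _ => w) (fun _ => w) (hconst _) (hconst _) (hconst _) y hy
    rw [hcov] at this
    rw [show fderiv ℝ q y u = _ from this, (hg.2 y hy).1 w, real_inner_comm w]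
    ring
  have h2 : ∀ v u, fderiv ℝ (fderiv ℝ q) x v u =
      2 * (⟪g x (covD Γ (fun _ => v) (fun y => Γ y u w) x), w⟫ + ⟪g x (Γ x u w), Γ x v w⟫) := by
    intro v u
    have e1 : fderiv ℝ (fun y => fderiv ℝ q y u) x v = fderiv ℝ (fderiv ℝ q) x v u := by
      have := (hddq.hasFDerivAt.clm_apply (hasFDerivAt_const u x)).fderiv
      rw [this]; simp
    have e2 : (fun y => fderiv ℝ q y u) =ᶠ[nhds x] fun y => (2:ℝ) * ⟪g y (Γ y u w), w⟫ := by
      filter_upwards [hUx] with y hy using h1 u y hy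
    have h3 := hcomp (fun _ => v) (fun y => Γ y u w) (fun _ => w) (hconst _) (hΓ u w) (hconst _) x hx
    rw [hcov v w] at h3
    rw [← e1, e2.fderiv_eq, ← h3]
    have e4 := fderiv_const_smul_field (𝕜 := ℝ) (2:ℝ) (f := fun y => ⟪g y (Γ y u w), w⟫)
    exact congrArg (fun L : V → V →L[ℝ] ℝ => L x v) e4
  have hs := hsym u v
  rw [h2, h2] at hs
  have hsa : ⟪g x (Γ x u w), Γ x v w⟫ = ⟪g x (Γ x v w), Γ x u w⟫ := by
    rw [(hg.2 x hx).1, real_inner_comm]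
  have hb : bracket (fun _ : V => u) (fun _ => v) = fun _ => 0 := by
    ext y; simp [bracket, dirD]
  simp only [curv, curvOf]
  rw [hb, hcov, hcov, hcov]
  simp only [map_sub, inner_sub_left, map_zero, LinearMap.zero_apply, inner_zero_left]
  linarith

/-- Proposition 1: existence of the Riemann extensor field `R` with
`R(a∧b)·(c∧d) = −ρ(a,b,c)·_g d`. -/
theorem exists_riemann_field
    (U : Set V) (hU : IsOpen U)
    (Γ : V → V →ₗ[ℝ] V →ₗ[ℝ] V) (hΓ : IsConnection U Γ)
    (g : V → V →ₗ[ℝ] V) (hg : IsMetric U g)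
    (hcomp : Compatible U Γ g)
    (x : V) (hx : x ∈ U) :
    ∃ Rx : (⋀[ℝ]^2 V) →ₗ[ℝ] (⋀[ℝ]^2 V) →ₗ[ℝ] ℝ,
      ∀ a b c d : V → V, IsVectorField U a → IsVectorField U b →
        IsVectorField U c → IsVectorField U d →
        Rx (wedge2 (a x) (b x)) (wedge2 (c x) (d x)) = -⟪g x (curv Γ a b c x), d x⟫ := by
  obtain ⟨E, hE0, hE⟩ := curv_formula U hU Γ hΓ x hx
  have hconst : ∀ u : V, IsVectorField U (fun _ => u) := fun u => contDiffOn_const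
  let B : V →ₗ[ℝ] V →ₗ[ℝ] V →ₗ[ℝ] V →ₗ[ℝ] ℝ := LinearMap.mk₂ ℝ
    (fun u v => -((innerₗ V) ∘ₗ (g x) ∘ₗ (E u v)))
    (by intros; ext; simp [inner_add_left]; abel) (by intros; ext; simp [inner_smul_left])
    (by intros; ext; simp [inner_add_left]; abel) (by intros; ext; simp [inner_smul_left])
  have hB : ∀ u v w z, B u v w z = -⟪g x (E u v w), z⟫ := fun u v w z => rfl
  obtain ⟨R, hR⟩ := wedge2_lift2 B (fun u => by ext w z; simp [hB, hE0]) (by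
    intro u v w
    rw [hB, ← hE (fun _ => u) (fun _ => v) (fun _ => w) (hconst _) (hconst _) (hconst _),
      curv_skew U hU Γ hΓ g hg hcomp x hx, neg_zero])
  refine ⟨R, fun a b c d ha hb hc hd => ?_⟩
  rw [hR, hB, hE a b c ha hb hc]
end

section
/- (Compatibility of the deformed connection.) Let η : V →ₗ[ℝ] V be a fixed self-adjoint invertible operator, regarded as the constant metric x ↦ η, and suppose the connection D on U is η-compatible. Let h : U → V →ₗ[ℝ] V be a smooth map with each h x invertible, and define the metric g by g x := (h x)† ∘ η ∘ (h x), where † is the adjoint with respect to the inner product of V. Then the h-deformation D' of D is g-compatible. -/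
open scoped RealInnerProductSpace

variable {V : Type*} [NormedAddCommGroup V] [InnerProductSpace ℝ V] [FiniteDimensional ℝ V]

/-- The `h`-deformation `D'_a X = h⁻¹·(D_a (h·X))` of the covariant derivative of `Γ`,
written with an explicit pointwise inverse `hinv` of `h`. -/
noncomputable def deform (Γ : V → V →ₗ[ℝ] V →ₗ[ℝ] V) (h hinv : V → V →ₗ[ℝ] V) :
    (V → V) → (V → V) → V → V :=
  fun a X x => hinv x (covD Γ a (fun y => h y (X y)) x)

/-- If `D` is compatible with the constant metric `η` and `g = h† ∘ η ∘ h`, then the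
`h`-deformation of `D` is compatible with `g`. -/
theorem deformed_connection_compatible
    (U : Set V) (hU : IsOpen U)
    (Γ : V → V →ₗ[ℝ] V →ₗ[ℝ] V) (hΓ : IsConnection U Γ)
    (η : V →ₗ[ℝ] V) (hη_sa : ∀ u v : V, ⟪η u, v⟫ = ⟪u, η v⟫)
    (hη_bij : Function.Bijective η)
    (hcomp : Compatible U Γ (fun _ => η))
    (h hinv : V → V →ₗ[ℝ] V)
    (hsmooth : ∀ u : V, ContDiffOn ℝ (⊤ : ℕ∞) (fun x => h x u) U)
    (hbij : ∀ x ∈ U, Function.Bijective (h x))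
    (hleft : ∀ x ∈ U, ∀ v : V, hinv x (h x v) = v)
    (hright : ∀ x ∈ U, ∀ v : V, h x (hinv x v) = v) :
    CompatibleD U (deform Γ h hinv)
      (fun x => (LinearMap.adjoint (h x)) ∘ₗ η ∘ₗ (h x)) := by
  have key : ∀ X : V → V, IsVectorField U X → IsVectorField U (fun y => h y (X y)) := by
    intro X hX
    let b := stdOrthonormalBasis ℝ V
    have e : (fun y => h y (X y)) = fun y => ∑ i, ⟪b i, X y⟫ • h y (b i) := by
      funext y
      conv_lhs => rw [← b.sum_repr' (X y)]
      simp only [map_sum, map_smul]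
    unfold IsVectorField at *
    rw [e]
    exact ContDiffOn.sum fun i _ => (contDiffOn_const.inner ℝ hX).smul (hsmooth (b i))
  intro a X Y ha hX hY x hx
  have := hcomp a _ _ ha (key X hX) (key Y hY) x hx
  simp only [LinearMap.comp_apply, LinearMap.adjoint_inner_left, deform, hright x hx]
  exact this
end

section
/- (Curvature conjugation under deformation, Eq. GEF.7.) Let D be a connection on U, let h : U → V →ₗ[ℝ] V be a smooth map with each h x invertible, and let D' be the h-deformation of D. Then the curvatures ρ' of D' and ρ of D satisfy, for all vector fields a, b, c on U and every x ∈ U: ρ'(a,b,c) x = (h x)⁻¹ (ρ(a, b, h·c) x). -/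
open scoped RealInnerProductSpace

variable {V : Type*} [NormedAddCommGroup V] [InnerProductSpace ℝ V] [FiniteDimensional ℝ V]

/-- Eq. (GEF.7): the curvature of the `h`-deformation is the conjugate of the curvature:
`ρ'(a,b,c) = h⁻¹ (ρ(a,b,h·c))`. -/
theorem deformed_curvature_conjugation
    (U : Set V) (hU : IsOpen U)
    (Γ : V → V →ₗ[ℝ] V →ₗ[ℝ] V) (hΓ : IsConnection U Γ)
    (h hinv : V → V →ₗ[ℝ] V)
    (hsmooth : ∀ u : V, ContDiffOn ℝ (⊤ : ℕ∞) (fun x => h x u) U)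
    (hbij : ∀ x ∈ U, Function.Bijective (h x))
    (hleft : ∀ x ∈ U, ∀ v : V, hinv x (h x v) = v)
    (hright : ∀ x ∈ U, ∀ v : V, h x (hinv x v) = v)
    (a b c : V → V) (ha : IsVectorField U a) (hb : IsVectorField U b)
    (hc : IsVectorField U c)
    (x : V) (hx : x ∈ U) :
    curvOf (deform Γ h hinv) a b c x = hinv x (curv Γ a b (fun y => h y (c y)) x) := by
  have key : ∀ p q : V → V, covD Γ p (fun y => h y (deform Γ h hinv q c y)) x
      = covD Γ p (covD Γ q (fun y => h y (c y))) x := by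
    intro p q
    have e : (fun y => h y (deform Γ h hinv q c y)) =ᶠ[nhds x]
        covD Γ q (fun y => h y (c y)) := by
      filter_upwards [hU.mem_nhds hx] with y hy
      exact hright y hy _
    have e1 := e.fderiv_eq (𝕜 := ℝ)
    have e2 := e.eq_of_nhds
    unfold covD at e1 e2 ⊢
    rw [e1]
    exact congrArg (fun w => _ + Γ x (p x) w) e2
  have k1 : ∀ p q : V → V, deform Γ h hinv p (deform Γ h hinv q c) x
      = hinv x (covD Γ p (covD Γ q (fun y => h y (c y))) x) := by
    intro p q
    rw [← key p q]
    rfl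
  unfold curv curvOf
  rw [k1, k1, map_sub, map_sub]
  rfl
end

section
/- (Flatness is preserved under deformation, Eq. GEF.8.) Let D be a connection on U whose curvature vanishes identically, i.e. ρ(a,b,c) = 0 for all vector fields a, b, c. Let h : U → V →ₗ[ℝ] V be a smooth map with each h x invertible. Then the curvature of the h-deformation D' of D also vanishes identically. -/
open scoped RealInnerProductSpace

variable {V : Type*} [NormedAddCommGroup V] [InnerProductSpace ℝ V] [FiniteDimensional ℝ V]

/-- Eq. (GEF.8): if the curvature of `D` vanishes identically on `U`, then so does the
curvature of the `h`-deformation `D'` of `D`. -/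
theorem deformed_flatness
    (U : Set V) (hU : IsOpen U)
    (Γ : V → V →ₗ[ℝ] V →ₗ[ℝ] V) (hΓ : IsConnection U Γ)
    (hflat : ∀ a b c : V → V, IsVectorField U a → IsVectorField U b → IsVectorField U c →
      ∀ x ∈ U, curv Γ a b c x = 0)
    (h hinv : V → V →ₗ[ℝ] V)
    (hsmooth : ∀ u : V, ContDiffOn ℝ (⊤ : ℕ∞) (fun x => h x u) U)
    (hbij : ∀ x ∈ U, Function.Bijective (h x))
    (hleft : ∀ x ∈ U, ∀ v : V, hinv x (h x v) = v)
    (hright : ∀ x ∈ U, ∀ v : V, h x (hinv x v) = v) :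
    ∀ a b c : V → V, IsVectorField U a → IsVectorField U b → IsVectorField U c →
      ∀ x ∈ U, curvOf (deform Γ h hinv) a b c x = 0 := by
  intro a b c ha hb hc x hx
  have hhc : IsVectorField U (fun y => h y (c y)) := by
    have e : (fun y => h y (c y)) = fun y => ∑ i,
        (stdOrthonormalBasis ℝ V).toBasis.equivFunL (c y) i •
          h y ((stdOrthonormalBasis ℝ V).toBasis i) := by
      funext y
      conv_lhs => rw [← (stdOrthonormalBasis ℝ V).toBasis.sum_equivFun (c y)]
      rw [map_sum]
      simp
    unfold IsVectorField at hc ⊢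
    rw [e]
    refine ContDiffOn.sum fun i _ => ContDiffOn.smul ?_ (hsmooth _)
    exact contDiffOn_pi.1
      ((stdOrthonormalBasis ℝ V).toBasis.equivFunL.contDiff.comp_contDiffOn hc) i
  have key : ∀ a b : V → V, deform Γ h hinv a (deform Γ h hinv b c) x =
      hinv x (covD Γ a (covD Γ b (fun y => h y (c y))) x) := by
    intro a b
    have e : (fun y => h y (deform Γ h hinv b c y)) =ᶠ[nhds x]
        covD Γ b (fun y => h y (c y)) := by
      filter_upwards [hU.mem_nhds hx] with y hy
      exact hright y hy _
    change hinv x (fderiv ℝ (fun y => h y (deform Γ h hinv b c y)) x (a x) +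
      Γ x (a x) (h x (deform Γ h hinv b c x))) = _
    rw [e.fderiv_eq]
    have e2 := e.eq_of_nhds
    rw [e2]
    rfl
  have hf := hflat a b _ ha hb hhc x hx
  unfold curv curvOf at hf
  unfold curvOf
  rw [key, key]
  change _ - _ - hinv x (covD Γ (bracket a b) (fun y => h y (c y)) x) = 0
  rw [← map_sub, ← map_sub, hf, map_zero]
end

section
/- (Torsion under deformation, Eq. GEF.15.) Let D be a connection on U and h : U → V →ₗ[ℝ] V a smooth map with each h x invertible. Let D'' be the full h-deformation of D, defined by D''_a X := h⁻¹·(D_{h·a} (h·X)). Then the torsions T of D and T'' of D'' satisfy, for all vector fields a, b on U: T''(h⁻¹·a, h⁻¹·b) = h⁻¹·(T(a,b)) + h⁻¹·[a,b] − [h⁻¹·a, h⁻¹·b]. -/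
open scoped RealInnerProductSpace

variable {V : Type*} [NormedAddCommGroup V] [InnerProductSpace ℝ V] [FiniteDimensional ℝ V]

/-- Torsion `T(a,b) = D_a b − D_b a − [a,b]` of an abstract covariant-derivative operator. -/
noncomputable def torsionOf (Dop : (V → V) → (V → V) → (V → V)) (a b : V → V) : V → V :=
  fun x => Dop a b x - Dop b a x - bracket a b x

/-- The full `h`-deformation `D''_a X = h⁻¹·(D_{h·a} (h·X))`, with an explicit pointwise
inverse `hinv` of `h`. -/
noncomputable def deformFull (Γ : V → V →ₗ[ℝ] V →ₗ[ℝ] V) (h hinv : V → V →ₗ[ℝ] V) :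
    (V → V) → (V → V) → V → V :=
  fun a X x => hinv x (covD Γ (fun y => h y (a y)) (fun y => h y (X y)) x)

/-- Eq. (GEF.15): `T''(h⁻¹a, h⁻¹b) = h⁻¹(T(a,b)) + h⁻¹([a,b]) − [h⁻¹a, h⁻¹b]`. -/
theorem deformed_torsion_formula
    (U : Set V) (hU : IsOpen U)
    (Γ : V → V →ₗ[ℝ] V →ₗ[ℝ] V) (hΓ : IsConnection U Γ)
    (h hinv : V → V →ₗ[ℝ] V)
    (hsmooth : ∀ u : V, ContDiffOn ℝ (⊤ : ℕ∞) (fun x => h x u) U)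
    (hinvsmooth : ∀ u : V, ContDiffOn ℝ (⊤ : ℕ∞) (fun x => hinv x u) U)
    (hbij : ∀ x ∈ U, Function.Bijective (h x))
    (hleft : ∀ x ∈ U, ∀ v : V, hinv x (h x v) = v)
    (hright : ∀ x ∈ U, ∀ v : V, h x (hinv x v) = v)
    (a b : V → V) (ha : IsVectorField U a) (hb : IsVectorField U b)
    (x : V) (hx : x ∈ U) :
    torsionOf (deformFull Γ h hinv) (fun y => hinv y (a y)) (fun y => hinv y (b y)) x =
      hinv x (torsionOf (covD Γ) a b x) + hinv x (bracket a b x)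
        - bracket (fun y => hinv y (a y)) (fun y => hinv y (b y)) x := by
  have key : ∀ c : V → V, fderiv ℝ (fun y => h y (hinv y (c y))) x = fderiv ℝ c x := by
    intro c
    apply Filter.EventuallyEq.fderiv_eq
    filter_upwards [hU.mem_nhds hx] with y hy
    exact hright y hy (c y)
  simp only [torsionOf, deformFull, covD, key, hright x hx, bracket, dirD, map_sub, map_add]
  abel
end

section
/- (Diffeomorphism-induced deformation preserves null curvature and torsion.) Let U, U' ⊆ V be open sets, 𝔥 : U → U' a smooth diffeomorphism (so fderiv ℝ 𝔥 x is invertible for each x ∈ U), and D a connection on U'. Define the pullback connection 𝔥*D on U by ((𝔥*D)_a X)(x) := (fderiv ℝ 𝔥 x)⁻¹ ((D_{𝔥_*a} (𝔥_*X)) (𝔥 x)), where 𝔥_* is the pushforward of vector fields, (𝔥_*a)(𝔥 x) := fderiv ℝ 𝔥 x (a x). If the curvature and the torsion of D vanish identically on U', then the curvature and the torsion of 𝔥*D vanish identically on U. -/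
open scoped RealInnerProductSpace

variable {V : Type*} [NormedAddCommGroup V] [InnerProductSpace ℝ V] [FiniteDimensional ℝ V]

/-- Pushforward of a vector field under a diffeomorphism `𝔥` with inverse `𝔥inv`. -/
noncomputable def pushf (𝔥 𝔥inv : V → V) (a : V → V) : V → V :=
  fun y => fderiv ℝ 𝔥 (𝔥inv y) (a (𝔥inv y))

/-- The pullback connection `(𝔥*D)_a X = (fderiv 𝔥)⁻¹ ∘ (D_{𝔥_*a} (𝔥_*X)) ∘ 𝔥`, the inverse
of `fderiv ℝ 𝔥 x` being `fderiv ℝ 𝔥inv (𝔥 x)`. -/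
noncomputable def pullbackD (𝔥 𝔥inv : V → V) (Γ : V → V →ₗ[ℝ] V →ₗ[ℝ] V) :
    (V → V) → (V → V) → V → V :=
  fun a X x => fderiv ℝ 𝔥inv (𝔥 x) (covD Γ (pushf 𝔥 𝔥inv a) (pushf 𝔥 𝔥inv X) (𝔥 x))

theorem pushf_smooth_aux {U U' : Set V} (hU : IsOpen U)
    {h k : V → V} (hh : ContDiffOn ℝ (⊤ : ℕ∞) h U) (hk : ContDiffOn ℝ (⊤ : ℕ∞) k U')
    (hm : Set.MapsTo k U' U) {a : V → V} (ha : IsVectorField U a) :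
    IsVectorField U' (pushf h k a) := by
  have h1 : ContDiffOn ℝ (⊤ : ℕ∞) (fderiv ℝ h) U :=
    hh.fderiv_of_isOpen hU (by simp)
  exact (h1.comp hk hm).clm_apply (ContDiffOn.comp ha hk hm)

theorem bracket_pushf_aux {U U' : Set V} (hU : IsOpen U) (hU' : IsOpen U')
    {h k : V → V} (hh : ContDiffOn ℝ (⊤ : ℕ∞) h U) (hk : ContDiffOn ℝ (⊤ : ℕ∞) k U')
    (hmh : Set.MapsTo h U U') (hm : Set.MapsTo k U' U)
    (hleft : ∀ x ∈ U, k (h x) = x) {a b : V → V}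
    (ha : IsVectorField U a) (hb : IsVectorField U b) {x : V} (hx : x ∈ U) :
    bracket (pushf h k a) (pushf h k b) (h x) = fderiv ℝ h x (bracket a b x) := by
  have h1 : ContDiffOn ℝ (⊤ : ℕ∞) (fderiv ℝ h) U :=
    hh.fderiv_of_isOpen hU (by simp)
  have hxU := hU.mem_nhds hx
  have hxU' := hU'.mem_nhds (hmh hx)
  have dh : DifferentiableAt ℝ h x := (hh.contDiffAt hxU).differentiableAt (by simp)
  have ddh : DifferentiableAt ℝ (fderiv ℝ h) x := (h1.contDiffAt hxU).differentiableAt (by simp)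
  have key : ∀ b : V → V, IsVectorField U b → ∀ v : V,
      fderiv ℝ (pushf h k b) (h x) (fderiv ℝ h x v) =
        fderiv ℝ (fderiv ℝ h) x v (b x) + fderiv ℝ h x (fderiv ℝ b x v) := by
    intro b hb v
    have db : DifferentiableAt ℝ b x := (ContDiffOn.contDiffAt hb hxU).differentiableAt (by simp)
    have dB : DifferentiableAt ℝ (pushf h k b) (h x) :=
      (ContDiffOn.contDiffAt (pushf_smooth_aux hU hh hk hm hb) hxU').differentiableAt (by simp)
    have e : (fun z => pushf h k b (h z)) =ᶠ[nhds x] fun z => fderiv ℝ h z (b z) := by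
      filter_upwards [hxU] with z hz
      simp only [pushf, hleft z hz]
    have e1 := (dB.hasFDerivAt.comp x dh.hasFDerivAt)
    have e2 := ddh.hasFDerivAt.clm_apply db.hasFDerivAt
    have e3 := congrArg (fun L => L v) (e1.unique (e2.congr_of_eventuallyEq e))
    simpa [add_comm] using e3
  have sym : IsSymmSndFDerivAt ℝ h x :=
    (hh.contDiffAt hxU).isSymmSndFDerivAt (by
      simp only [minSmoothness_of_isRCLikeNormedField]
      exact WithTop.coe_le_coe.2 (le_top : (2 : ℕ∞) ≤ ⊤))
  have ea : ∀ a : V → V, pushf h k a (h x) = fderiv ℝ h x (a x) := by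
    intro a; simp only [pushf, hleft x hx]
  simp only [bracket, dirD, ea, key a ha, key b hb, map_sub]
  rw [sym.eq (a x) (b x)]
  abel

/-- A diffeomorphism-induced deformation preserves null curvature and null torsion. -/
theorem pullback_connection_flat_and_torsion_free
    (U U' : Set V) (hU : IsOpen U) (hU' : IsOpen U')
    (𝔥 𝔥inv : V → V)
    (h𝔥 : ContDiffOn ℝ (⊤ : ℕ∞) 𝔥 U) (h𝔥inv : ContDiffOn ℝ (⊤ : ℕ∞) 𝔥inv U')
    (hmaps : Set.MapsTo 𝔥 U U') (hmaps' : Set.MapsTo 𝔥inv U' U)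
    (hleft : ∀ x ∈ U, 𝔥inv (𝔥 x) = x) (hright : ∀ y ∈ U', 𝔥 (𝔥inv y) = y)
    (hdbij : ∀ x ∈ U, Function.Bijective (fderiv ℝ 𝔥 x))
    (hdinv : ∀ x ∈ U, ∀ v : V, fderiv ℝ 𝔥inv (𝔥 x) (fderiv ℝ 𝔥 x v) = v ∧
      fderiv ℝ 𝔥 x (fderiv ℝ 𝔥inv (𝔥 x) v) = v)
    (Γ : V → V →ₗ[ℝ] V →ₗ[ℝ] V) (hΓ : IsConnection U' Γ)
    (hflat : ∀ a b c : V → V, IsVectorField U' a → IsVectorField U' b → IsVectorField U' c →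
      ∀ y ∈ U', curv Γ a b c y = 0)
    (htorfree : ∀ a b : V → V, IsVectorField U' a → IsVectorField U' b →
      ∀ y ∈ U', torsionOf (covD Γ) a b y = 0) :
    (∀ a b c : V → V, IsVectorField U a → IsVectorField U b → IsVectorField U c →
      ∀ x ∈ U, curvOf (pullbackD 𝔥 𝔥inv Γ) a b c x = 0) ∧
    (∀ a b : V → V, IsVectorField U a → IsVectorField U b →
      ∀ x ∈ U, torsionOf (pullbackD 𝔥 𝔥inv Γ) a b x = 0) := by
  have ea : ∀ a : V → V, ∀ x ∈ U, pushf 𝔥 𝔥inv a (𝔥 x) = fderiv ℝ 𝔥 x (a x) := by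
    intro a x hx; simp only [pushf, hleft x hx]
  have sm : ∀ a : V → V, IsVectorField U a → IsVectorField U' (pushf 𝔥 𝔥inv a) :=
    fun a ha => pushf_smooth_aux hU h𝔥 h𝔥inv hmaps' ha
  have br : ∀ a b : V → V, IsVectorField U a → IsVectorField U b → ∀ x ∈ U,
      bracket (pushf 𝔥 𝔥inv a) (pushf 𝔥 𝔥inv b) (𝔥 x) = fderiv ℝ 𝔥 x (bracket a b x) :=
    fun a b ha hb x hx => bracket_pushf_aux hU hU' h𝔥 h𝔥inv hmaps hmaps' hleft ha hb hx
  constructor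
  · intro a b c ha hb hc x hx
    have e : ∀ b : V → V, pushf 𝔥 𝔥inv (pullbackD 𝔥 𝔥inv Γ b c) =ᶠ[nhds (𝔥 x)]
        covD Γ (pushf 𝔥 𝔥inv b) (pushf 𝔥 𝔥inv c) := by
      intro b
      filter_upwards [hU'.mem_nhds (hmaps hx)] with y hy
      have h2 := (hdinv (𝔥inv y) (hmaps' hy)
        (covD Γ (pushf 𝔥 𝔥inv b) (pushf 𝔥 𝔥inv c) y)).2
      rw [hright y hy] at h2
      rw [← h2]
      simp only [pullbackD, pushf, hright y hy]
    have e' : ∀ a b : V → V, covD Γ a (pushf 𝔥 𝔥inv (pullbackD 𝔥 𝔥inv Γ b c)) (𝔥 x) =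
        covD Γ a (covD Γ (pushf 𝔥 𝔥inv b) (pushf 𝔥 𝔥inv c)) (𝔥 x) := by
      intro a b
      simp only [covD] at e ⊢
      rw [(e b).fderiv_eq, (e b).eq_of_nhds]
      rfl
    have e3 : covD Γ (pushf 𝔥 𝔥inv (bracket a b)) (pushf 𝔥 𝔥inv c) (𝔥 x) =
        covD Γ (bracket (pushf 𝔥 𝔥inv a) (pushf 𝔥 𝔥inv b)) (pushf 𝔥 𝔥inv c) (𝔥 x) := by
      simp only [covD]
      rw [br a b ha hb x hx, ea (bracket a b) x hx]
    have hf := hflat _ _ _ (sm a ha) (sm b hb) (sm c hc) (𝔥 x) (hmaps hx)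
    simp only [curv, curvOf] at hf
    unfold curvOf
    rw [pullbackD, pullbackD, pullbackD, e', e', e3, ← map_sub, ← map_sub, hf, map_zero]
  · intro a b ha hb x hx
    have hf := htorfree _ _ (sm a ha) (sm b hb) (𝔥 x) (hmaps hx)
    simp only [torsionOf] at hf
    rw [br a b ha hb x hx] at hf
    unfold torsionOf
    rw [← (hdinv x hx (bracket a b x)).1]
    simp only [pullbackD]
    rw [← map_sub, ← map_sub, hf, map_zero]
end

section
/- (Symmetry of the Riemann field, Eq. LGS.2.) Suppose the connection D on U is g-compatible and symmetric (Γ x u v = Γ x v u for all x, u, v). Fix x ∈ U and let R_x be any bilinear form on the second exterior power ⋀²[ℝ] V satisfying R_x (a x ∧ b x, c x ∧ d x) = −⟪g x (ρ(a,b,c) x), d x⟫ for all vector fields a, b, c, d on U. Then R_x is a symmetric bilinear form: R_x (B, C) = R_x (C, B) for all B, C ∈ ⋀²[ℝ] V. -/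
open scoped RealInnerProductSpace

variable {V : Type*} [NormedAddCommGroup V] [InnerProductSpace ℝ V] [FiniteDimensional ℝ V]

theorem wedge2_eq_iMulti (u v : V) : wedge2 u v = exteriorPower.ιMulti ℝ 2 ![u, v] := rfl

theorem wedge2_antisymm (u v : V) : wedge2 u v = - wedge2 v u := by
  rw [wedge2_eq_iMulti, wedge2_eq_iMulti]
  have h := (exteriorPower.ιMulti ℝ 2 (M := V)).map_swap ![v, u] (i := 0) (j := 1) (by decide)
  rw [← h]
  congr 1
  ext i
  fin_cases i <;> simp

theorem curv_const (Γ : V → V →ₗ[ℝ] V →ₗ[ℝ] V) (a b c x : V) :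
    curv Γ (fun _ => a) (fun _ => b) (fun _ => c) x =
      fderiv ℝ (fun y => Γ y b c) x a + Γ x a (Γ x b c)
        - (fderiv ℝ (fun y => Γ y a c) x b + Γ x b (Γ x a c)) := by
  have h : ∀ p q : V, covD Γ (fun _ => p) (fun _ => q) = fun y => Γ y p q := by
    intro p q
    funext y
    simp [covD]
  simp only [curv, curvOf, h]
  simp [covD, bracket, dirD]

theorem curv_bianchi (U : Set V) (hU : IsOpen U)
    (Γ : V → V →ₗ[ℝ] V →ₗ[ℝ] V)
    (hsymm : ∀ x ∈ U, ∀ u v : V, Γ x u v = Γ x v u)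
    (x : V) (hx : x ∈ U) (a b c : V) :
    curv Γ (fun _ => a) (fun _ => b) (fun _ => c) x
      + curv Γ (fun _ => b) (fun _ => c) (fun _ => a) x
      + curv Γ (fun _ => c) (fun _ => a) (fun _ => b) x = 0 := by
  have h : ∀ p q : V, fderiv ℝ (fun y => Γ y p q) x = fderiv ℝ (fun y => Γ y q p) x := by
    intro p q
    apply Filter.EventuallyEq.fderiv_eq
    filter_upwards [hU.mem_nhds hx] with y hy using hsymm y hy p q
  simp only [curv_const]
  rw [h c b, h c a, h b a, hsymm x hx c b, hsymm x hx c a, hsymm x hx b a]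
  abel

/-- Eq. (LGS.2): for a Levi-Civita structure, any bilinear form `R_x` on `⋀[ℝ]^2 V`
representing the curvature at `x ∈ U` is symmetric. -/
theorem riemann_field_symmetric
    (U : Set V) (hU : IsOpen U)
    (Γ : V → V →ₗ[ℝ] V →ₗ[ℝ] V) (hΓ : IsConnection U Γ)
    (g : V → V →ₗ[ℝ] V) (hg : IsMetric U g)
    (hcomp : Compatible U Γ g)
    (hsymm : ∀ x ∈ U, ∀ u v : V, Γ x u v = Γ x v u)
    (x : V) (hx : x ∈ U)
    (Rx : (⋀[ℝ]^2 V) →ₗ[ℝ] (⋀[ℝ]^2 V) →ₗ[ℝ] ℝ)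
    (hRx : ∀ a b c d : V → V, IsVectorField U a → IsVectorField U b →
      IsVectorField U c → IsVectorField U d →
      Rx (wedge2 (a x) (b x)) (wedge2 (c x) (d x)) = -⟪g x (curv Γ a b c x), d x⟫) :
    ∀ B C : ⋀[ℝ]^2 V, Rx B C = Rx C B := by
  have key : ∀ a b c d : V, Rx (wedge2 a b) (wedge2 c d) =
      -⟪g x (curv Γ (fun _ => a) (fun _ => b) (fun _ => c) x), d⟫ := fun a b c d =>
    hRx (fun _ => a) (fun _ => b) (fun _ => c) (fun _ => d)
      contDiffOn_const contDiffOn_const contDiffOn_const contDiffOn_const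
  have bi : ∀ a b c d : V, Rx (wedge2 a b) (wedge2 c d) + Rx (wedge2 b c) (wedge2 a d)
      + Rx (wedge2 c a) (wedge2 b d) = 0 := by
    intro a b c d
    rw [key, key, key, ← neg_add, ← neg_add, ← inner_add_left, ← inner_add_left,
      ← map_add, ← map_add, curv_bianchi U hU Γ hsymm x hx]
    simp
  have a1 : ∀ a b c d : V, Rx (wedge2 a b) (wedge2 c d) = - Rx (wedge2 b a) (wedge2 c d) := by
    intro a b c d
    rw [wedge2_antisymm a b]; simp
  have a2 : ∀ a b c d : V, Rx (wedge2 a b) (wedge2 c d) = - Rx (wedge2 a b) (wedge2 d c) := by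
    intro a b c d
    rw [wedge2_antisymm c d]; simp
  have pair : ∀ a b c d : V, Rx (wedge2 a b) (wedge2 c d) = Rx (wedge2 c d) (wedge2 a b) := by
    intro a b c d
    have b1 := bi a b c d
    have b2 := bi b c d a
    have b3 := bi c d a b
    have b4 := bi d a b c
    linarith [a2 a b c d, a1 a b c d, a2 b c a d, a1 b c a d, a2 c a b d, a1 c a b d,
      a2 b c d a, a2 c d b a, a1 c d b a, a2 d b c a, a1 d b c a, a2 d b a c, a1 d b a c,
      a2 c d a b, a2 d a c b, a1 d a c b, a2 a c d b, a1 a c d b, a2 a c b d, a1 a c b d,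
      a2 d a b c, a2 a b d c, a1 a b d c, a2 b d a c, a1 b d a c, a1 b d c a]
  have hflip : Rx = Rx.flip := by
    apply exteriorPower.linearMap_ext
    ext m : 1
    apply exteriorPower.linearMap_ext
    ext n
    have e : ∀ m : Fin 2 → V, exteriorPower.ιMulti ℝ 2 m = wedge2 (m 0) (m 1) := by
      intro m
      rw [wedge2_eq_iMulti]
      congr 1
      ext i
      fin_cases i <;> rfl
    simp only [LinearMap.compAlternatingMap_apply, LinearMap.flip_apply, e]
    exact pair _ _ _ _
  intro B C
  exact congrArg (fun f => f B C) hflip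
end
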